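/- Let (X, f, x₀) be a minimal counting system and let ⊕ be the unique binary operation on X satisfying (a0) x ⊕ x₀ = x for all x ∈ X and (a1) x ⊕ f(x') = f(x ⊕ x') for all x, x' ∈ X. Then: (1) every element of X has an additive inverse (for each x ∈ X there exists x' ∈ X with x ⊕ x' = x₀) if and only if f is bijective; (2) the cancellation law holds for ⊕ (x₁ ⊕ x = x₂ ⊕ x implies x₁ = x₂) if and only if f is injective. -/

import Mathlib

/-!
By minimality every element is an iterate `f^[n] x₀`, and adding it on the right is the map
`f^[n]`. Hence cancellation is the injectivity of the iterates of `f`. If `f x₀` has an inverse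
`f^[n] x₀`, then `f^[n + 1]` fixes `x₀`, hence every element, so `f` is bijective. Conversely, if
`f` is surjective, then `f^[n] y = x₀` for some `y`, which is an inverse of `f^[n] x₀` because
addition is commutative.
-/

open Function

section CountingSystem

variable {X : Type*} {f : X → X} {x₀ : X} {add : X → X → X}

/-- Minimality of the counting system `(X, f, x₀)`, the abstract form of the induction principle.
The system is left unbundled, so that its addition remains a plain function on `X`. -/
def IsMinimalCountingSystem (f : X → X) (x₀ : X) : Prop :=
  ∀ S : Set X, x₀ ∈ S → (∀ x ∈ S, f x ∈ S) → S = Set.univ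

/-- The recursive laws (a0) and (a1) of addition on the counting system `(X, f, x₀)`, with the
recursion in the second argument. -/
structure IsCountingAddition (f : X → X) (x₀ : X) (add : X → X → X) : Prop where
  add_base (x : X) : add x x₀ = x
  add_apply (x y : X) : add x (f y) = f (add x y)

namespace IsMinimalCountingSystem

theorem exists_iterate_eq (hX : IsMinimalCountingSystem f x₀) (x : X) : ∃ n, f^[n] x₀ = x := by
  have range_eq_univ : Set.range (fun n ↦ f^[n] x₀) = Set.univ := by
    refine hX _ ⟨0, rfl⟩ ?_
    rintro _ ⟨n, rfl⟩
    exact ⟨n + 1, iterate_succ_apply' f n x₀⟩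
  exact Set.range_eq_univ.mp range_eq_univ x

theorem bijective_of_mem_periodicPts (hX : IsMinimalCountingSystem f x₀)
    (hx₀ : x₀ ∈ periodicPts f) : Bijective f := by
  have periodicPts_eq_univ : periodicPts f = Set.univ :=
    hX _ hx₀ fun _ hx ↦ (bijOn_periodicPts f).mapsTo hx
  rw [← Set.bijOn_univ, ← periodicPts_eq_univ]
  exact bijOn_periodicPts f

end IsMinimalCountingSystem

namespace IsCountingAddition

theorem add_iterate (hadd : IsCountingAddition f x₀ add) (x : X) (n : ℕ) :
    add x (f^[n] x₀) = f^[n] x := by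
  induction n with
  | zero => exact hadd.add_base x
  | succ n ih => rw [iterate_succ_apply', hadd.add_apply, ih, iterate_succ_apply']

theorem comm (hadd : IsCountingAddition f x₀ add) (hX : IsMinimalCountingSystem f x₀) (x y : X) :
    add x y = add y x := by
  obtain ⟨m, rfl⟩ := hX.exists_iterate_eq x
  obtain ⟨n, rfl⟩ := hX.exists_iterate_eq y
  rw [hadd.add_iterate, hadd.add_iterate, ← iterate_add_apply, ← iterate_add_apply, add_comm]

theorem bijective_of_add_eq_base (hadd : IsCountingAddition f x₀ add)
    (hX : IsMinimalCountingSystem f x₀) {y : X} (hy : add (f x₀) y = x₀) : Bijective f := by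
  obtain ⟨n, rfl⟩ := hX.exists_iterate_eq y
  rw [hadd.add_iterate, ← iterate_succ_apply] at hy
  exact hX.bijective_of_mem_periodicPts (mk_mem_periodicPts n.succ_pos hy)

theorem exists_add_eq_base (hadd : IsCountingAddition f x₀ add)
    (hX : IsMinimalCountingSystem f x₀) (hf : Surjective f) (x : X) : ∃ y, add x y = x₀ := by
  obtain ⟨n, rfl⟩ := hX.exists_iterate_eq x
  obtain ⟨y, hy⟩ := hf.iterate n x₀
  exact ⟨y, by rw [hadd.comm hX, hadd.add_iterate, hy]⟩

theorem injective_add_right (hadd : IsCountingAddition f x₀ add)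
    (hX : IsMinimalCountingSystem f x₀) (hf : Injective f) (x : X) :
    Injective fun z ↦ add z x := by
  obtain ⟨n, rfl⟩ := hX.exists_iterate_eq x
  simpa only [hadd.add_iterate] using hf.iterate n

theorem injective_of_injective_add_right (hadd : IsCountingAddition f x₀ add)
    (h : Injective fun z ↦ add z (f x₀)) : Injective f := by
  simpa only [hadd.add_apply, hadd.add_base] using h

end IsCountingAddition

end CountingSystem

/-- Let `(X, f, x₀)` be a minimal counting system and `add` the unique addition
(satisfying (a0) and (a1)). Then every element has an additive inverse iff `f` is
bijective, and the cancellation law holds for `add` iff `f` is injective. -/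
theorem minimal_addition_group_and_cancellation {X : Type*} (f : X → X) (x₀ : X)
    (hmin : ∀ S : Set X, x₀ ∈ S → (∀ x ∈ S, f x ∈ S) → S = Set.univ)
    (add : X → X → X)
    (ha0 : ∀ x : X, add x x₀ = x)
    (ha1 : ∀ x x' : X, add x (f x') = f (add x x')) :
    ((∀ x : X, ∃ x' : X, add x x' = x₀) ↔ Function.Bijective f) ∧
      ((∀ x₁ x₂ x : X, add x₁ x = add x₂ x → x₁ = x₂) ↔ Function.Injective f) := by
  have hX : IsMinimalCountingSystem f x₀ := hmin
  have hadd : IsCountingAddition f x₀ add := ⟨ha0, ha1⟩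
  refine ⟨⟨fun hinv ↦ ?_, fun hf ↦ hadd.exists_add_eq_base hX hf.surjective⟩,
    ⟨fun hcancel ↦ ?_, fun hf _ _ x h ↦ hadd.injective_add_right hX hf x h⟩⟩
  · obtain ⟨_, hy⟩ := hinv (f x₀)
    exact hadd.bijective_of_add_eq_base hX hy
  · exact hadd.injective_of_injective_add_right fun x₁ x₂ h ↦ hcancel x₁ x₂ (f x₀) h
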